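/- Let R be a commutative ring, x, y, z, w ∈ R, and let f be a function assigning an element of R to every binary delta-matroid whose ground set is a finite set of natural numbers. Suppose f satisfies the Tutte relations: for every such binary delta-matroid D = (E; Φ) and every e ∈ E, (i) f(D) = x·f(D ∖ e) + y·f(D/e) if e is neither a loop nor a coloop of D, (ii) f(D) = z·f(D ∖ e) if e is a loop of D, and (iii) f(D) = w·f(D/e) if e is a coloop of D. Then f satisfies the 4-term relation: for every binary delta-matroid D = (E; Φ) with E a finite set of natural numbers and every pair of distinct elements a, b ∈ E, f(D) − f(D'_{ab}) = f(D̃_{ab}) − f((D̃_{ab})'_{ab}). -/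

import Mathlib

open scoped symmDiff

variable {α : Type*} [DecidableEq α]

/-- A (proper) delta-matroid: a nonempty collection `Φ` of subsets of the ground set `E`
satisfying the Symmetric Exchange Axiom. -/
def IsDeltaMatroid (E : Finset α) (Φ : Set (Finset α)) : Prop :=
  Φ.Nonempty ∧ (∀ φ ∈ Φ, φ ⊆ E) ∧
    ∀ φ₁ ∈ Φ, ∀ φ₂ ∈ Φ, ∀ e ∈ φ₁ ∆ φ₂, ∃ e' ∈ φ₁ ∆ φ₂, φ₁ ∆ ({e, e'} : Finset α) ∈ Φ

/-- The principal submatrix of `A` with rows and columns indexed by `U`. -/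
def principalSubmatrix (A : Matrix α α (ZMod 2)) (U : Finset α) :
    Matrix U U (ZMod 2) :=
  A.submatrix (fun i => (i : α)) (fun i => (i : α))

/-- `U` is nondegenerate for `A`: the principal submatrix `A_U` is invertible over `F₂`
(the empty submatrix has determinant `1`, hence is invertible by convention). -/
def Nondeg (A : Matrix α α (ZMod 2)) (U : Finset α) : Prop :=
  IsUnit (principalSubmatrix A U).det

/-- Twist of a collection of feasible sets by a subset `T`:
`Φ * T = {φ ∆ T : φ ∈ Φ}`. -/
def twist (Φ : Set (Finset α)) (T : Finset α) : Set (Finset α) :=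
  {ψ | ∃ φ ∈ Φ, ψ = φ ∆ T}

/-- A binary delta-matroid on ground set `E`: a twist of the nondegeneracy set system of a
symmetric matrix over `F₂` (the matrix is indexed by the ambient type; only its `E × E`
block is ever used, since only principal submatrices `A_U` with `U ⊆ E` occur). -/
def IsBinaryDeltaMatroid (E : Finset α) (Φ : Set (Finset α)) : Prop :=
  ∃ (A : Matrix α α (ZMod 2)) (T : Finset α), A.IsSymm ∧ T ⊆ E ∧
    Φ = {ψ | ∃ U : Finset α, U ⊆ E ∧ Nondeg A U ∧ ψ = U ∆ T}

/-- Feasible sets of the deletion `D ∖ e`. -/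
def delSet (Φ : Set (Finset α)) (e : α) : Set (Finset α) :=
  {φ ∈ Φ | e ∉ φ}

/-- Feasible sets of the contraction `D / e`. -/
def conSet (Φ : Set (Finset α)) (e : α) : Set (Finset α) :=
  {ψ | ∃ φ ∈ Φ, e ∈ φ ∧ ψ = φ.erase e}

/-- Feasible sets of the handle slide (second Vassiliev move) of `a` over `b`:
`Φ ∆ {φ ∪ {a} : φ ⊆ E ∖ {a, b}, φ ∪ {b} ∈ Φ}`. -/
def slideSet (E : Finset α) (Φ : Set (Finset α)) (a b : α) : Set (Finset α) :=
  Φ ∆ {ψ | ∃ φ : Finset α, φ ⊆ E \ {a, b} ∧ φ ∪ {b} ∈ Φ ∧ ψ = φ ∪ {a}}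

/-- Feasible sets of the first Vassiliev move (exchange of handle ends):
`D\'_{ab} = ((D * {b})~_{ab}) * {b}`. -/
def firstMove (E : Finset α) (Φ : Set (Finset α)) (a b : α) : Set (Finset α) :=
  twist (slideSet E (twist Φ {b}) a b) {b}


theorem mem_twist' (Φ : Set (Finset ℕ)) (T ψ : Finset ℕ) : ψ ∈ twist Φ T ↔ ψ ∆ T ∈ Φ := by
  constructor
  · rintro ⟨φ, h, rfl⟩
    simpa using h
  · intro h
    exact ⟨_, h, by simp⟩

theorem sub_E {E : Finset ℕ} {Φ : Set (Finset ℕ)} (h : IsBinaryDeltaMatroid E Φ) :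
    ∀ φ ∈ Φ, φ ⊆ E := by
  obtain ⟨A, T, _, hT, rfl⟩ := h
  rintro φ ⟨U, hU, _, rfl⟩
  intro i hi
  rw [Finset.mem_symmDiff] at hi
  rcases hi with hi | hi
  · exact hU hi.1
  · exact hT hi.1

theorem mem_slide {E : Finset ℕ} {Φ : Set (Finset ℕ)} (hs : ∀ φ ∈ Φ, φ ⊆ E) {a b : ℕ}
    (hab : a ≠ b) (ψ : Finset ℕ) :
    ψ ∈ slideSet E Φ a b ↔
      Xor (ψ ∈ Φ) (a ∈ ψ ∧ b ∉ ψ ∧ insert b (ψ.erase a) ∈ Φ) := by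
  have key : ψ ∈ {ψ | ∃ φ : Finset ℕ, φ ⊆ E \ {a, b} ∧ φ ∪ {b} ∈ Φ ∧ ψ = φ ∪ {a}} ↔
      (a ∈ ψ ∧ b ∉ ψ ∧ insert b (ψ.erase a) ∈ Φ) := by
    constructor
    · rintro ⟨φ, h1, h2, rfl⟩
      have ha : a ∉ φ := fun h => by simpa using h1 h
      have hb : b ∉ φ := fun h => by simpa using h1 h
      refine ⟨by simp, by simp [hb, hab.symm], ?_⟩
      convert h2 using 1
      ext i; simp; grind
    · rintro ⟨h1, h2, h3⟩
      refine ⟨ψ.erase a, ?_, ?_, ?_⟩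
      · intro i hi
        have := hs _ h3 (Finset.mem_insert_of_mem hi)
        simp at hi ⊢
        grind
      · convert h3 using 1
        ext i; simp
      · ext i; simp; grind
  unfold slideSet
  rw [Set.mem_symmDiff, key]
  rfl

theorem mem_first {E : Finset ℕ} {Φ : Set (Finset ℕ)} (hs : ∀ φ ∈ Φ, φ ⊆ E) {a b : ℕ}
    (hb : b ∈ E) (hab : a ≠ b) (ψ : Finset ℕ) :
    ψ ∈ firstMove E Φ a b ↔
      Xor (ψ ∈ Φ) (a ∈ ψ ∧ b ∈ ψ ∧ (ψ.erase a).erase b ∈ Φ) := by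
  unfold firstMove
  rw [mem_twist', mem_slide _ hab, mem_twist', mem_twist']
  · have e1 : ψ ∆ {b} ∆ {b} = ψ := by simp
    rw [e1]
    have e2 : a ∈ ψ ∆ {b} ↔ a ∈ ψ := by simp [Finset.mem_symmDiff, hab]
    have e3 : b ∉ ψ ∆ {b} ↔ b ∈ ψ := by simp [Finset.mem_symmDiff]
    rw [e2, e3]
    have e4 : (insert b ((ψ ∆ {b}).erase a)) ∆ {b} = (ψ.erase a).erase b := by
      ext i; simp [Finset.mem_symmDiff]; grind
    rw [e4]
  · intro φ h
    rw [mem_twist'] at h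
    intro i hi
    by_cases hib : i = b
    · exact hib ▸ hb
    · exact hs _ h (by simp [Finset.mem_symmDiff, hib, hi])

theorem binary_twist {E : Finset ℕ} {Φ : Set (Finset ℕ)} (h : IsBinaryDeltaMatroid E Φ)
    {b : ℕ} (hb : b ∈ E) : IsBinaryDeltaMatroid E (twist Φ {b}) := by
  obtain ⟨A, T, hA, hT, rfl⟩ := h
  refine ⟨A, T ∆ {b}, hA, ?_, ?_⟩
  · intro i hi
    simp only [Finset.mem_symmDiff, Finset.mem_singleton] at hi
    rcases hi with hi | hi
    · exact hT hi.1
    · exact hi.1 ▸ hb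
  · ext ψ
    simp only [twist, Set.mem_ofPred_eq]
    constructor
    · rintro ⟨_, ⟨U, h1, h2, rfl⟩, rfl⟩
      exact ⟨U, h1, h2, symmDiff_assoc _ _ _⟩
    · rintro ⟨U, h1, h2, rfl⟩
      exact ⟨_, ⟨U, h1, h2, rfl⟩, (symmDiff_assoc _ _ _).symm⟩

theorem nondeg_iff_ker (A : Matrix ℕ ℕ (ZMod 2)) (U E : Finset ℕ) (hU : U ⊆ E) :
    Nondeg A U ↔ ∀ v : E → ZMod 2, (∀ i : E, (i : ℕ) ∉ U → v i = 0) →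
      (∀ i : E, (i : ℕ) ∈ U → ∑ j : E, A i j * v j = 0) → v = 0 := by
  unfold Nondeg
  rw [isUnit_iff_ne_zero, ne_eq, ← Matrix.exists_mulVec_eq_zero_iff]
  have conv : ∀ (g : ℕ → ZMod 2) (k : ℕ → ZMod 2), (∀ i ∈ E, i ∉ U → g i = 0) →
      ∑ j : E, k j * g j = ∑ j : U, k j * g j := by
    intro g k hg
    rw [Finset.sum_coe_sort E (fun j => k j * g j), Finset.sum_coe_sort U (fun j => k j * g j)]
    symm
    apply Finset.sum_subset hU
    intro i h1 h2
    rw [hg i h1 h2, mul_zero]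
  constructor
  · intro h v hv0 hv
    by_contra hne
    apply h
    let g : ℕ → ZMod 2 := fun i => if h : i ∈ E then v ⟨i, h⟩ else 0
    have gv : ∀ i : E, g i = v i := fun i => by simp [g]
    have hg : ∀ i ∈ E, i ∉ U → g i = 0 := fun i h1 h2 => by
      rw [gv ⟨i, h1⟩]; exact hv0 _ h2
    refine ⟨fun i => g i, ?_, ?_⟩
    · intro h0
      apply hne
      funext i
      by_cases hi : (i : ℕ) ∈ U
      · rw [← gv]; exact congrFun h0 ⟨i, hi⟩
      · exact hv0 i hi
    · funext i
      have := hv ⟨i, hU i.2⟩ i.2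
      simp only [← gv] at this
      rw [conv g (fun j => A i j) hg] at this
      simpa [Matrix.mulVec, dotProduct, principalSubmatrix] using this
  · rintro h ⟨v, hne, hv⟩
    apply hne
    let g : ℕ → ZMod 2 := fun i => if h : i ∈ U then v ⟨i, h⟩ else 0
    have gv : ∀ i : U, g i = v i := fun i => by simp [g]
    have hg : ∀ i ∈ E, i ∉ U → g i = 0 := fun i h1 h2 => by simp [g, h2]
    have := h (fun i => g i) (fun i hi => hg i i.2 hi) (by
      intro i hi
      rw [conv g (fun j => A i j) hg]
      have := congrFun hv ⟨i, hi⟩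
      simpa [Matrix.mulVec, dotProduct, principalSubmatrix, gv] using this)
    funext i
    rw [← gv]
    exact congrFun this ⟨i, hU i.2⟩

/-- Principal pivot: change of the base feasible set. -/
theorem exists_pivot (A : Matrix ℕ ℕ (ZMod 2)) (hA : A.IsSymm) (E X : Finset ℕ) (hX : X ⊆ E)
    (hn : Nondeg A X) : ∃ B : Matrix ℕ ℕ (ZMod 2), B.IsSymm ∧
      ∀ U ⊆ E, (Nondeg B U ↔ Nondeg A (U ∆ X)) := by
  classical
  let M : Matrix E E (ZMod 2) := fun i j =>
    if (i : ℕ) ∈ X then A i j else (1 : Matrix E E (ZMod 2)) i j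
  let N : Matrix E E (ZMod 2) := fun i j =>
    if (i : ℕ) ∈ X then (1 : Matrix E E (ZMod 2)) i j else A i j
  have Mv : ∀ (v : E → ZMod 2) (i : E), M.mulVec v i =
      if (i : ℕ) ∈ X then ∑ j : E, A i j * v j else v i := by
    intro v i
    by_cases h : (i : ℕ) ∈ X <;> simp [M, Matrix.mulVec, dotProduct, h, Matrix.one_apply]
  have Nv : ∀ (v : E → ZMod 2) (i : E), N.mulVec v i =
      if (i : ℕ) ∈ X then v i else ∑ j : E, A i j * v j := by
    intro v i
    by_cases h : (i : ℕ) ∈ X <;> simp [N, Matrix.mulVec, dotProduct, h, Matrix.one_apply]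
  have hM : IsUnit M.det := by
    rw [isUnit_iff_ne_zero, ne_eq, ← Matrix.exists_mulVec_eq_zero_iff]
    rintro ⟨v, hne, hv⟩
    apply hne
    refine (nondeg_iff_ker A X E hX).1 hn v ?_ ?_
    · intro i hi
      have := congrFun hv i
      rw [Mv] at this
      simpa [hi] using this
    · intro i hi
      have := congrFun hv i
      rw [Mv] at this
      simpa [hi] using this
  have hMN : M.transpose * N = N.transpose * M := by
    ext j k
    have e1 : (M.transpose * N) j k =
        (if (k : ℕ) ∈ X then A k j else 0) + (if (j : ℕ) ∈ X then 0 else A j k) := by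
      have : ∀ i : E, M i j * N i k =
          (if i = k then (if (k : ℕ) ∈ X then A k j else 0) else 0) +
          (if i = j then (if (j : ℕ) ∈ X then 0 else A j k) else 0) := by
        intro i
        simp only [M, N, Matrix.one_apply]
        by_cases h : (i : ℕ) ∈ X <;> by_cases h1 : i = k <;> by_cases h2 : i = j <;> grind
      simp only [Matrix.mul_apply, Matrix.transpose_apply, this, Finset.sum_add_distrib]
      simp
    have e2 : (N.transpose * M) j k =
        (if (j : ℕ) ∈ X then A j k else 0) + (if (k : ℕ) ∈ X then 0 else A k j) := by
      have : ∀ i : E, N i j * M i k =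
          (if i = j then (if (j : ℕ) ∈ X then A j k else 0) else 0) +
          (if i = k then (if (k : ℕ) ∈ X then 0 else A k j) else 0) := by
        intro i
        simp only [M, N, Matrix.one_apply]
        by_cases h : (i : ℕ) ∈ X <;> by_cases h1 : i = k <;> by_cases h2 : i = j <;> grind
      simp only [Matrix.mul_apply, Matrix.transpose_apply, this, Finset.sum_add_distrib]
      simp
    rw [e1, e2, hA.apply j k]
    have h2 : ∀ t : ZMod 2, t + t = 0 := by decide
    split_ifs <;> simp [h2]
  let B0 : Matrix E E (ZMod 2) := N * M⁻¹
  have hMi : M * M⁻¹ = 1 := Matrix.mul_nonsing_inv M hM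
  have hiM : M⁻¹ * M = 1 := Matrix.nonsing_inv_mul M hM
  have hMt : M⁻¹.transpose * M.transpose = 1 := by
    rw [← Matrix.transpose_mul, hMi, Matrix.transpose_one]
  have hB0 : B0.transpose = B0 := by
    have : B0.transpose = M⁻¹.transpose * (N.transpose * M) * M⁻¹ := by
      simp only [B0, Matrix.transpose_mul, Matrix.mul_assoc, hMi, Matrix.mul_one]
    rw [this, ← hMN, ← Matrix.mul_assoc, hMt, Matrix.one_mul]
  let B : Matrix ℕ ℕ (ZMod 2) := fun i j =>
    if h : i ∈ E ∧ j ∈ E then B0 ⟨i, h.1⟩ ⟨j, h.2⟩ else 0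
  have BB : ∀ i j : E, B i j = B0 i j := fun i j => by simp [B]
  have Bv : ∀ (v : E → ZMod 2) (i : E), ∑ j : E, B i j * (M.mulVec v) j = N.mulVec v i := by
    intro v i
    simp only [BB]
    change B0.mulVec (M.mulVec v) i = _
    rw [Matrix.mulVec_mulVec, Matrix.mul_assoc, hiM, Matrix.mul_one]
  refine ⟨B, ?_, ?_⟩
  · ext i j
    change (if h : j ∈ E ∧ i ∈ E then B0 ⟨j, h.1⟩ ⟨i, h.2⟩ else 0) =
      (if h : i ∈ E ∧ j ∈ E then B0 ⟨i, h.1⟩ ⟨j, h.2⟩ else 0)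
    by_cases h : i ∈ E ∧ j ∈ E
    · rw [dif_pos h, dif_pos h.symm]
      exact congrFun (congrFun hB0 ⟨i, h.1⟩) ⟨j, h.2⟩
    · rw [dif_neg h, dif_neg (fun h' => h (And.symm h'))]
  · intro U hU
    have hUX : U ∆ X ⊆ E := by
      intro i hi
      rw [Finset.mem_symmDiff] at hi
      rcases hi with hi | hi
      · exact hU hi.1
      · exact hX hi.1
    rw [nondeg_iff_ker B U E hU, nondeg_iff_ker A _ E hUX]
    constructor
    · intro h v h1 h2
      have := h (M.mulVec v) (by
        intro i hi
        rw [Mv]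
        split_ifs with hx
        · exact h2 i (by simp [Finset.mem_symmDiff, hx, hi])
        · exact h1 i (by simp [Finset.mem_symmDiff, hx, hi])) (by
        intro i hi
        rw [Bv, Nv]
        split_ifs with hx
        · exact h1 i (by simp [Finset.mem_symmDiff, hx, hi])
        · exact h2 i (by simp [Finset.mem_symmDiff, hx, hi]))
      have h3 : (M⁻¹).mulVec (M.mulVec v) = v := by
        rw [Matrix.mulVec_mulVec, hiM, Matrix.one_mulVec]
      rw [← h3, this, Matrix.mulVec_zero]
    · intro h v' h1 h2
      obtain ⟨v, rfl⟩ : ∃ v, v' = M.mulVec v :=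
        ⟨(M⁻¹).mulVec v', by rw [Matrix.mulVec_mulVec, hMi, Matrix.one_mulVec]⟩
      have : v = 0 := by
        apply h
        · intro i hi
          rw [Finset.mem_symmDiff] at hi
          by_cases hx : (i : ℕ) ∈ X
          · have := h2 i (by grind)
            rw [Bv, Nv, if_pos hx] at this
            exact this
          · have := h1 i (by grind)
            rw [Mv, if_neg hx] at this
            exact this
        · intro i hi
          rw [Finset.mem_symmDiff] at hi
          by_cases hx : (i : ℕ) ∈ X
          · have := h1 i (by grind)
            rw [Mv, if_pos hx] at this
            exact this
          · have := h2 i (by grind)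
            rw [Bv, Nv, if_neg hx] at this
            exact this
      rw [this, Matrix.mulVec_zero]

/-- The matrix obtained by adding row/column `b` to row/column `a`. -/
def slideMat (A : Matrix ℕ ℕ (ZMod 2)) (a b : ℕ) : Matrix ℕ ℕ (ZMod 2) := fun i j =>
  A i j + (if i = a then A b j else 0) + (if j = a then A i b else 0) +
    (if i = a then (if j = a then A b b else 0) else 0)

theorem slideMat_symm {A : Matrix ℕ ℕ (ZMod 2)} (hA : A.IsSymm) (a b : ℕ) :
    (slideMat A a b).IsSymm := by
  ext i j
  simp only [Matrix.transpose_apply, slideMat]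
  rw [hA.apply i j, hA.apply b j, hA.apply i b]
  split_ifs <;> ring

theorem zmod2_xor : ∀ s t : ZMod 2, (s + t ≠ 0 ↔ Xor (s ≠ 0) (t ≠ 0)) := by
  unfold Xor
  decide

theorem nondeg_slideMat_of_notMem (A : Matrix ℕ ℕ (ZMod 2)) {a : ℕ} (b : ℕ) {U : Finset ℕ}
    (ha : a ∉ U) : Nondeg (slideMat A a b) U ↔ Nondeg A U := by
  have : principalSubmatrix (slideMat A a b) U = principalSubmatrix A U := by
    ext i j
    have hi : (i : ℕ) ≠ a := fun h => ha (h ▸ i.2)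
    have hj : (j : ℕ) ≠ a := fun h => ha (h ▸ j.2)
    simp [principalSubmatrix, slideMat, hi, hj]
  unfold Nondeg
  rw [this]

theorem nondeg_slideMat {A : Matrix ℕ ℕ (ZMod 2)} (hA : A.IsSymm) {a b : ℕ} (hab : a ≠ b)
    {U : Finset ℕ} (ha : a ∈ U) : Nondeg (slideMat A a b) U ↔
      Xor (Nondeg A U) (b ∉ U ∧ Nondeg A (insert b (U.erase a))) := by
  classical
  let a0 : U := ⟨a, ha⟩
  let g : ℕ → U → ℕ := fun u => Function.update (fun i : U => (i : ℕ)) a0 u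
  let m : ℕ → ℕ → Matrix U U (ZMod 2) := fun u v => A.submatrix (g u) (g v)
  have gne : ∀ u (i : U), i ≠ a0 → g u i = i := fun u i h => by simp [g, h]
  have geq : ∀ u, g u a0 = u := fun u => by simp [g]
  have ga : g a = fun i : U => (i : ℕ) := by
    funext i
    by_cases h : i = a0
    · subst h; exact geq a
    · exact gne a i h
  have hne : ∀ i : U, i ≠ a0 → (i : ℕ) ≠ a := fun i h h' => h (Subtype.ext h')
  have hdet : (principalSubmatrix (slideMat A a b) U).det
      = (m a a).det + (m b b).det := by
    -- row expansion
    let K : ℕ → Matrix U U (ZMod 2) := fun u i j => A (g u i) j + if j = a0 then A (g u i) b else 0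
    have hrow : (principalSubmatrix (slideMat A a b) U).det = (K a).det + (K b).det := by
      have e : principalSubmatrix (slideMat A a b) U =
          Matrix.updateRow (K a) a0 (K a a0 + K b a0) := by
        ext i j
        by_cases h : i = a0
        · subst h
          rw [Matrix.updateRow_self]
          by_cases h2 : j = a0
          · subst h2
            simp [principalSubmatrix, slideMat, K, geq, a0]; ring
          · simp [principalSubmatrix, slideMat, K, geq, h2, hne j h2, a0]
        · rw [Matrix.updateRow_ne h]
          by_cases h2 : j = a0
          · subst h2
            simp [principalSubmatrix, slideMat, K, gne _ _ h, hne i h, a0]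
          · simp [principalSubmatrix, slideMat, K, gne _ _ h, h2, hne i h, hne j h2]
      rw [e, Matrix.det_updateRow_add]
      congr 2
      · exact Matrix.updateRow_eq_self _ _
      · ext i j
        by_cases h : i = a0
        · subst h; rw [Matrix.updateRow_self]
        · rw [Matrix.updateRow_ne h]; simp [K, gne _ _ h]
    have hcol : ∀ u, (K u).det = (m u a).det + (m u b).det := by
      intro u
      have e : K u = Matrix.updateCol (m u a) a0
          ((fun i => m u a i a0) + (fun i => m u b i a0)) := by
        ext i j
        by_cases h : j = a0
        · subst h
          rw [Matrix.updateCol_self]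
          simp [K, m, geq, a0]
        · rw [Matrix.updateCol_ne h]
          simp [K, m, gne _ _ h, h]
      rw [e, Matrix.det_updateCol_add]
      congr 2
      · exact Matrix.updateCol_eq_self _ _
      · ext i j
        by_cases h : j = a0
        · subst h; rw [Matrix.updateCol_self]
        · rw [Matrix.updateCol_ne h]; simp [m, gne _ _ h]
    have ht : (m a b).det = (m b a).det := by
      rw [← Matrix.det_transpose]
      congr 1
      ext i j
      simp only [m, Matrix.transpose_apply, Matrix.submatrix_apply]
      exact hA.apply _ _
    have h2 : ∀ p q r : ZMod 2, p + q + (q + r) = p + r := by decide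
    rw [hrow, hcol, hcol, ht, h2]
  have hU : Nondeg A U ↔ (m a a).det ≠ 0 := by
    unfold Nondeg
    rw [isUnit_iff_ne_zero]
    simp only [m, ga]
    rfl
  have hb : (b ∉ U ∧ Nondeg A (insert b (U.erase a))) ↔ (m b b).det ≠ 0 := by
    by_cases hbU : b ∈ U
    · have : (m b b).det = 0 := by
        refine Matrix.det_zero_of_row_eq (i := a0) (j := ⟨b, hbU⟩) ?_ ?_
        · intro h; exact hab (congrArg Subtype.val h)
        · funext j
          have : g b ⟨b, hbU⟩ = b :=
            gne b ⟨b, hbU⟩ (fun h => hab (congrArg Subtype.val h).symm)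
          simp [m, geq, this]
      simp [hbU, this]
    · have hg : Function.Bijective (fun i : U => (⟨g b i, by
          by_cases h : i = a0
          · subst h; rw [geq]; simp
          · rw [gne _ _ h]; simp [hne i h]⟩ : (insert b (U.erase a) : Finset ℕ))) := by
        constructor
        · intro i j hij
          have hij : g b i = g b j := congrArg Subtype.val hij
          by_cases h : i = a0 <;> by_cases h' : j = a0
          · rw [h, h']
          · subst h; rw [geq, gne _ _ h'] at hij; exact absurd (hij ▸ j.2) hbU
          · subst h'; rw [geq, gne _ _ h] at hij; exact absurd (hij ▸ i.2) hbU
          · rw [gne _ _ h, gne _ _ h'] at hij; exact Subtype.ext hij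
        · rintro ⟨i, hi⟩
          rw [Finset.mem_insert, Finset.mem_erase] at hi
          rcases hi with rfl | ⟨h1, h2⟩
          · exact ⟨a0, Subtype.ext (geq _)⟩
          · exact ⟨⟨i, h2⟩, Subtype.ext (gne _ _ (fun h => h1 (congrArg Subtype.val h)))⟩
      have : (principalSubmatrix A (insert b (U.erase a))).det = (m b b).det := by
        rw [← Matrix.det_submatrix_equiv_self (Equiv.ofBijective _ hg)]
        rfl
      unfold Nondeg
      rw [isUnit_iff_ne_zero, this]
      simp [hbU]
  rw [hU, hb]
  unfold Nondeg
  rw [isUnit_iff_ne_zero, hdet]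
  exact zmod2_xor _ _

theorem mem_rep {E T : Finset ℕ} {A : Matrix ℕ ℕ (ZMod 2)} (hT : T ⊆ E) (ψ : Finset ℕ) :
    ψ ∈ {ψ | ∃ U : Finset ℕ, U ⊆ E ∧ Nondeg A U ∧ ψ = U ∆ T} ↔ ψ ⊆ E ∧ Nondeg A (ψ ∆ T) := by
  constructor
  · rintro ⟨U, h1, h2, rfl⟩
    refine ⟨?_, by simpa using h2⟩
    intro i hi
    rw [Finset.mem_symmDiff] at hi
    rcases hi with hi | hi
    · exact h1 hi.1
    · exact hT hi.1
  · rintro ⟨h1, h2⟩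
    refine ⟨_, ?_, h2, by simp⟩
    intro i hi
    rw [Finset.mem_symmDiff] at hi
    rcases hi with hi | hi
    · exact h1 hi.1
    · exact hT hi.1

theorem binary_slide {E : Finset ℕ} {Φ : Set (Finset ℕ)} (h : IsBinaryDeltaMatroid E Φ)
    {a b : ℕ} (ha : a ∈ E) (hb : b ∈ E) (hab : a ≠ b) (hP : ∃ φ ∈ Φ, a ∉ φ ∧ b ∉ φ) :
    IsBinaryDeltaMatroid E (slideSet E Φ a b) := by
  have hs := sub_E h
  obtain ⟨S, hS, haS, hbS⟩ := hP
  have hSE := hs S hS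
  obtain ⟨A, T, hA, hT, hΦ⟩ := h
  have hmem : ∀ ψ, ψ ∈ Φ ↔ ψ ⊆ E ∧ Nondeg A (ψ ∆ T) := fun ψ => by rw [hΦ]; exact mem_rep hT ψ
  have hST : S ∆ T ⊆ E := by
    intro i hi
    rw [Finset.mem_symmDiff] at hi
    rcases hi with hi | hi
    · exact hSE hi.1
    · exact hT hi.1
  obtain ⟨B, hB, hBU⟩ := exists_pivot A hA E (S ∆ T) hST ((hmem S).1 hS).2
  have hmem' : ∀ ψ, ψ ∈ Φ ↔ ψ ⊆ E ∧ Nondeg B (ψ ∆ S) := by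
    intro ψ
    rw [hmem]
    refine and_congr_right fun hψ => ?_
    rw [hBU]
    · rw [symmDiff_assoc, symmDiff_symmDiff_cancel_left]
    · intro i hi
      rw [Finset.mem_symmDiff] at hi
      rcases hi with hi | hi
      · exact hψ hi.1
      · exact hSE hi.1
  refine ⟨slideMat B a b, S, slideMat_symm hB a b, hSE, ?_⟩
  ext ψ
  rw [mem_rep hSE, mem_slide hs hab, hmem', hmem']
  have ea : a ∈ ψ ∆ S ↔ a ∈ ψ := by simp [Finset.mem_symmDiff, haS]
  have eb : b ∈ ψ ∆ S ↔ b ∈ ψ := by simp [Finset.mem_symmDiff, hbS]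
  by_cases haψ : a ∈ ψ
  · rw [nondeg_slideMat hB hab (ea.2 haψ), eb]
    have e1 : (insert b (ψ.erase a)) ∆ S = insert b ((ψ ∆ S).erase a) := by
      ext i
      simp only [Finset.mem_symmDiff, Finset.mem_insert, Finset.mem_erase]
      grind
    have e2 : insert b (ψ.erase a) ⊆ E ↔ ψ ⊆ E := by
      simp only [Finset.subset_iff, Finset.mem_insert, Finset.mem_erase]
      grind
    rw [e1, e2]
    by_cases hψ : ψ ⊆ E
    · simp only [hψ, haψ, true_and]
    · simp [Xor, hψ]
  · rw [nondeg_slideMat_of_notMem B b (fun h => haψ (ea.1 h))]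
    simp [Xor, haψ]

theorem binary_first {E : Finset ℕ} {Φ : Set (Finset ℕ)} (h : IsBinaryDeltaMatroid E Φ)
    {a b : ℕ} (ha : a ∈ E) (hb : b ∈ E) (hab : a ≠ b) (hR : ∃ φ ∈ Φ, a ∉ φ ∧ b ∈ φ) :
    IsBinaryDeltaMatroid E (firstMove E Φ a b) := by
  refine binary_twist (binary_slide (binary_twist h hb) ha hb hab ?_) hb
  obtain ⟨φ, h1, h2, h3⟩ := hR
  refine ⟨φ ∆ {b}, ⟨φ, h1, rfl⟩, ?_, ?_⟩
  · simp [Finset.mem_symmDiff, h2, hab]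
  · simp [Finset.mem_symmDiff, h3]

theorem delSet_congr {Φ Ψ : Set (Finset ℕ)} {b : ℕ} (h : ∀ φ, b ∉ φ → (φ ∈ Φ ↔ φ ∈ Ψ)) :
    delSet Φ b = delSet Ψ b := by
  ext φ
  simp only [delSet, Set.mem_ofPred_eq]
  constructor <;> rintro ⟨h1, h2⟩
  · exact ⟨(h φ h2).1 h1, h2⟩
  · exact ⟨(h φ h2).2 h1, h2⟩

theorem conSet_congr {Φ Ψ : Set (Finset ℕ)} {b : ℕ} (h : ∀ φ, b ∈ φ → (φ ∈ Φ ↔ φ ∈ Ψ)) :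
    conSet Φ b = conSet Ψ b := by
  ext ψ
  simp only [conSet, Set.mem_ofPred_eq]
  constructor <;> rintro ⟨φ, h1, h2, h3⟩
  · exact ⟨φ, (h φ h2).1 h1, h2, h3⟩
  · exact ⟨φ, (h φ h2).2 h1, h2, h3⟩

/-- Any invariant `f` of binary delta-matroids (with ground sets that
are finite sets of natural numbers) with values in a commutative ring satisfying the
Tutte relations satisfies the 4-term relation
`f(D) − f(D\'_{ab}) = f(D~_{ab}) − f((D~_{ab})\'_{ab})`. -/
theorem tutte_implies_fourTerm {R : Type*} [CommRing R] (x y z w : R)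
    (f : Finset ℕ → Set (Finset ℕ) → R)
    (hTutte_del_con : ∀ (E : Finset ℕ) (Φ : Set (Finset ℕ)),
      IsBinaryDeltaMatroid E Φ → ∀ e ∈ E,
        (∃ φ ∈ Φ, e ∈ φ) → (∃ φ ∈ Φ, e ∉ φ) →
          f E Φ = x * f (E.erase e) (delSet Φ e) + y * f (E.erase e) (conSet Φ e))
    (hTutte_loop : ∀ (E : Finset ℕ) (Φ : Set (Finset ℕ)),
      IsBinaryDeltaMatroid E Φ → ∀ e ∈ E, (∀ φ ∈ Φ, e ∉ φ) →
        f E Φ = z * f (E.erase e) (delSet Φ e))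
    (hTutte_coloop : ∀ (E : Finset ℕ) (Φ : Set (Finset ℕ)),
      IsBinaryDeltaMatroid E Φ → ∀ e ∈ E, (∀ φ ∈ Φ, e ∈ φ) →
        f E Φ = w * f (E.erase e) (conSet Φ e)) :
    ∀ (E : Finset ℕ) (Φ : Set (Finset ℕ)), IsBinaryDeltaMatroid E Φ →
      ∀ a ∈ E, ∀ b ∈ E, a ≠ b →
        f E Φ - f E (firstMove E Φ a b)
          = f E (slideSet E Φ a b) - f E (firstMove E (slideSet E Φ a b) a b) := by
  intro E Φ hD a ha b hb hab
  have hs := sub_E hD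
  have ms := mem_slide (E := E) hs hab
  have hs' : ∀ φ ∈ slideSet E Φ a b, φ ⊆ E := by
    intro φ hφ
    rw [ms] at hφ
    rcases hφ with ⟨h, _⟩ | ⟨⟨h1, h2, h3⟩, _⟩
    · exact hs _ h
    · intro i hi
      by_cases hia : i = a
      · exact hia ▸ ha
      · exact hs _ h3 (by simp [hia, hi])
  have mf := mem_first (E := E) hs hb hab
  have mf' := mem_first (E := E) hs' hb hab
  have ms1 : ∀ φ, a ∉ φ → (φ ∈ slideSet E Φ a b ↔ φ ∈ Φ) := by
    intro φ h
    rw [ms]; simp [Xor, h]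
  have ms2 : ∀ φ, b ∈ φ → (φ ∈ slideSet E Φ a b ↔ φ ∈ Φ) := by
    intro φ h
    rw [ms]; simp [Xor, h]
  have mf1 : ∀ φ, a ∉ φ → (φ ∈ firstMove E Φ a b ↔ φ ∈ Φ) := by
    intro φ h
    rw [mf]; simp [Xor, h]
  have mf2 : ∀ φ, b ∉ φ → (φ ∈ firstMove E Φ a b ↔ φ ∈ Φ) := by
    intro φ h
    rw [mf]; simp [Xor, h]
  have mf1' : ∀ φ, a ∉ φ → (φ ∈ firstMove E (slideSet E Φ a b) a b ↔ φ ∈ Φ) := by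
    intro φ h
    rw [mf', ms1 φ h]; simp [Xor, h]
  have mf2' : ∀ φ, b ∉ φ →
      (φ ∈ firstMove E (slideSet E Φ a b) a b ↔ φ ∈ slideSet E Φ a b) := by
    intro φ h
    rw [mf']; simp [Xor, h]
  have mf3' : ∀ φ, b ∈ φ →
      (φ ∈ firstMove E (slideSet E Φ a b) a b ↔ φ ∈ firstMove E Φ a b) := by
    intro φ h
    rw [mf', mf, ms2 φ h, ms1 ((φ.erase a).erase b) (by simp)]
  by_cases hP : ∃ φ ∈ Φ, a ∉ φ ∧ b ∉ φ
  swap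
  · have e1 : firstMove E Φ a b = Φ := by
      ext ψ
      have : (ψ.erase a).erase b ∉ Φ := fun h => hP ⟨_, h, by simp, by simp⟩
      rw [mf]; simp [Xor, this]
    have e2 : firstMove E (slideSet E Φ a b) a b = slideSet E Φ a b := by
      ext ψ
      have : (ψ.erase a).erase b ∉ slideSet E Φ a b := fun h =>
        hP ⟨_, (ms1 _ (by simp)).1 h, by simp, by simp⟩
      rw [mf']; simp [Xor, this]
    rw [e1, e2, sub_self, sub_self]
  by_cases hR : ∃ φ ∈ Φ, a ∉ φ ∧ b ∈ φ
  swap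
  · have e1 : slideSet E Φ a b = Φ := by
      ext ψ
      have : insert b (ψ.erase a) ∉ Φ := fun h => hR ⟨_, h, by simp [hab], by simp⟩
      rw [ms]; simp [Xor, this]
    rw [e1]
  have b1 := binary_slide hD ha hb hab hP
  have b2 := binary_first hD ha hb hab hR
  obtain ⟨p, hp, hpa, hpb⟩ := hP
  obtain ⟨r, hr, hra, hrb⟩ := hR
  have b3 := binary_first b1 ha hb hab ⟨r, (ms1 r hra).2 hr, hra, hrb⟩
  rw [hTutte_del_con E Φ hD b hb ⟨r, hr, hrb⟩ ⟨p, hp, hpb⟩,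
    hTutte_del_con E _ b1 b hb ⟨r, (ms1 r hra).2 hr, hrb⟩ ⟨p, (ms1 p hpa).2 hp, hpb⟩,
    hTutte_del_con E _ b2 b hb ⟨r, (mf1 r hra).2 hr, hrb⟩ ⟨p, (mf1 p hpa).2 hp, hpb⟩,
    hTutte_del_con E _ b3 b hb ⟨r, (mf1' r hra).2 hr, hrb⟩ ⟨p, (mf1' p hpa).2 hp, hpb⟩,
    delSet_congr mf2, delSet_congr mf2', conSet_congr ms2, conSet_congr mf3']
  ring
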